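/- Let G be the CPDAG of the Markov equivalence class of a DAG, let X and Y be distinct nodes, and let p be a possibly directed path from X to Y in G. Then some subsequence of the nodes of p forms an unshielded possibly directed path from X to Y in G. -/

import Mathlib

/-- A directed acyclic graph on node set `V`: a directed edge relation with no
directed cycles (no edge `a → b` together with a directed path from `b` back to `a`). -/
structure Dag (V : Type*) where
  edge : V → V → Prop
  acyclic : ∀ a b : V, edge a b → ¬ Relation.ReflTransGen edge b a

variable {V : Type*}

namespace Dag

/-- `a` is an ancestor of `b` (equivalently, `b` is a descendant of `a`):
there is a directed path from `a` to `b`; every node is its own ancestor. -/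
def Anc (D : Dag V) (a b : V) : Prop := Relation.ReflTransGen D.edge a b

/-- `a` and `b` are adjacent (joined by an edge in either direction). -/
def Adj (D : Dag V) (a b : V) : Prop := D.edge a b ∨ D.edge b a

/-- The parents of `x` in the DAG `D`. -/
def Pa (D : Dag V) (x : V) : Set V := {a | D.edge a x}

/-- The Markov blanket of `x`: parents, children, and parents of children of `x`
(excluding `x` itself). -/
def MB (D : Dag V) (x : V) : Set V :=
  {v | v ≠ x ∧ (D.edge v x ∨ D.edge x v ∨ ∃ c : V, D.edge x c ∧ D.edge v c)}

end Dag

/-- A path between `x` and `y` with respect to an adjacency relation `A`: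
a sequence of distinct nodes, starting at `x` and ending at `y`, in which
consecutive nodes are adjacent. `n` is the number of edges of the path. -/
structure GPath (A : V → V → Prop) (x y : V) where
  n : ℕ
  f : Fin (n + 1) → V
  inj : Function.Injective f
  first : f ⟨0, by omega⟩ = x
  last : f ⟨n, by omega⟩ = y
  adj : ∀ i : Fin n, A (f i.castSucc) (f i.succ)

namespace GPath

/-- The non-endpoint node at position `i` of the path `p` is a collider with respect
to the directed edge relation `E`: both incident edges of the path point into it. -/
def ColliderAt {A : V → V → Prop} {x y : V} (p : GPath A x y)
    (E : V → V → Prop) (i : ℕ) : Prop :=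
  ∃ (_ : 0 < i) (_ : i < p.n),
    E (p.f ⟨i - 1, by omega⟩) (p.f ⟨i, by omega⟩) ∧
    E (p.f ⟨i + 1, by omega⟩) (p.f ⟨i, by omega⟩)

/-- The path `p` is blocked by the node set `S` in the DAG `D`: it contains a
non-collider that lies in `S`, or a collider such that neither the collider nor any
of its descendants lies in `S`. -/
def Blocked {A : V → V → Prop} {x y : V} (p : GPath A x y)
    (D : Dag V) (S : Set V) : Prop :=
  ∃ (i : ℕ) (_ : 0 < i) (_ : i < p.n),
    (¬ p.ColliderAt D.edge i ∧ p.f ⟨i, by omega⟩ ∈ S) ∨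
    (p.ColliderAt D.edge i ∧ ∀ d : V, D.Anc (p.f ⟨i, by omega⟩) d → d ∉ S)

end GPath

namespace Dag

/-- `x` and `y` are d-separated by `S` in the DAG `D`: every path between `x` and `y`
is blocked by `S`. -/
def dSep (D : Dag V) (x y : V) (S : Set V) : Prop :=
  ∀ p : GPath D.Adj x y, p.Blocked D S

/-- Two DAGs on the same node set are Markov equivalent if they have exactly the same
d-separation relations. -/
def MEquiv (D D' : Dag V) : Prop :=
  ∀ (x y : V) (S : Set V), D.dSep x y S ↔ D'.dSep x y S

/-- The edge between `a` and `b` is directed `a → b` in the CPDAG of the Markov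
equivalence class of `D`: the edge `a → b` holds in every DAG Markov equivalent to `D`. -/
def CpDir (D : Dag V) (a b : V) : Prop :=
  ∀ D' : Dag V, D.MEquiv D' → D'.edge a b

/-- The edge between `a` and `b` is undirected (`a − b`) in the CPDAG: `a` and `b` are
adjacent (the CPDAG has the same adjacencies as the DAGs of the MEC) but the edge is not
directed either way in the CPDAG. -/
def CpUndir (D : Dag V) (a b : V) : Prop :=
  D.Adj a b ∧ ¬ D.CpDir a b ∧ ¬ D.CpDir b a

/-- `Pa_G(a)`: the nodes with a directed edge into `a` in the CPDAG. -/
def CpPa (D : Dag V) (a : V) : Set V := {p | D.CpDir p a}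

/-- `Ch_G(a)`: the nodes `b` with the edge directed `a → b` in the CPDAG. -/
def CpCh (D : Dag V) (a : V) : Set V := {c | D.CpDir a c}

/-- `Sib_G(a)`: the nodes joined to `a` by an undirected edge in the CPDAG. -/
def CpSib (D : Dag V) (a : V) : Set V := {s | D.CpUndir a s}

end Dag

namespace GPath

/-- `p` is a possibly directed path in the CPDAG: no edge on it is directed
backwards (as `V_i ← V_{i+1}`) in the CPDAG. -/
def CpPossiblyDirected {D : Dag V} {x y : V} (p : GPath D.Adj x y) : Prop :=
  ∀ i : Fin p.n, ¬ D.CpDir (p.f i.succ) (p.f i.castSucc)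

/-- `p` is a (fully) directed path in the CPDAG: every edge on it is directed
forwards in the CPDAG. -/
def CpDirected {D : Dag V} {x y : V} (p : GPath D.Adj x y) : Prop :=
  ∀ i : Fin p.n, D.CpDir (p.f i.castSucc) (p.f i.succ)

/-- `p` is a directed path from `x` to `y` in the DAG `D` itself. -/
def DirectedIn {D : Dag V} {x y : V} (p : GPath D.Adj x y) : Prop :=
  ∀ i : Fin p.n, D.edge (p.f i.castSucc) (p.f i.succ)

/-- `p` is unshielded: for every three consecutive nodes on it, the first and the
third are non-adjacent. -/
def Unshielded {D : Dag V} {x y : V} (p : GPath D.Adj x y) : Prop :=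
  ∀ (i : ℕ) (_ : i + 2 ≤ p.n), ¬ D.Adj (p.f ⟨i, by omega⟩) (p.f ⟨i + 2, by omega⟩)

end GPath

namespace Dag

/-- `x` is a possible ancestor of `y` in the CPDAG: there is a possibly directed path
from `x` to `y`. -/
def PossAn (D : Dag V) (x y : V) : Prop :=
  ∃ p : GPath D.Adj x y, p.CpPossiblyDirected

/-- `x` is an explicit ancestor of `y` in the CPDAG: there is a fully directed path
from `x` to `y` in the CPDAG. -/
def ExplAn (D : Dag V) (x y : V) : Prop :=
  ∃ p : GPath D.Adj x y, p.CpDirected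

/-- The CPDAG is amenable relative to `(x, y)`: every possibly directed path from
`x` to `y` starts with a directed edge out of `x`. -/
def Amenable (D : Dag V) (x y : V) : Prop :=
  ∀ p : GPath D.Adj x y, p.CpPossiblyDirected →
    ∀ _ : 0 < p.n, D.CpDir (p.f ⟨0, by omega⟩) (p.f ⟨1, by omega⟩)

/-- `S` is a valid adjustment set for `(x, y)` in the DAG `D`:
(i) no element of `S` is a descendant of any node `w ≠ x` lying on a directed path
from `x` to `y`, and (ii) every path between `x` and `y` that is not a directed path
from `x` to `y` is blocked by `S`. -/
def ValidAdjustment (D : Dag V) (x y : V) (S : Set V) : Prop :=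
  (∀ s ∈ S, ∀ w : V, w ≠ x → D.Anc x w → D.Anc w y → ¬ D.Anc w s) ∧
  (∀ p : GPath D.Adj x y, ¬ p.DirectedIn → p.Blocked D S)

/-- `Cn_D(x, y)`: the nodes `w ≠ x` lying on some directed path from `x` to `y` in `D`. -/
def Cn (D : Dag V) (x y : V) : Set V := {w | w ≠ x ∧ D.Anc x w ∧ D.Anc w y}

end Dag


namespace Dag

/-- Active walks starting in `x` (colliders in `S`, non-colliders outside `S`), as states:
`Reach D S x v true` if some such walk ends in `v` with an edge into `v`,
`Reach D S x v false` if some such walk ends in `v` with an edge out of `v`. -/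
inductive Reach (D : Dag V) (S : Set V) (x : V) : V → Bool → Prop
  | startOut {v : V} : D.edge x v → Reach D S x v true
  | startIn {v : V} : D.edge v x → Reach D S x v false
  | down {v w : V} {h : Bool} : Reach D S x v h → D.edge v w → v ∉ S → Reach D S x w true
  | up {v w : V} : Reach D S x v false → D.edge w v → v ∉ S → Reach D S x w false
  | coll {v w : V} : Reach D S x v true → D.edge w v → v ∈ S → Reach D S x w false

theorem edge_irrefl (D : Dag V) (a : V) : ¬ D.edge a a :=
  fun h => D.acyclic a a h Relation.ReflTransGen.refl

theorem edge_asymm (D : Dag V) {a b : V} (h : D.edge a b) : ¬ D.edge b a :=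
  fun h' => D.acyclic a b h (Relation.ReflTransGen.single h')

theorem edge_trans_not (D : Dag V) {a b c : V} (h : D.edge a b) (h' : D.edge b c) :
    ¬ D.edge c a :=
  fun h'' => D.acyclic a b h ((Relation.ReflTransGen.single h').tail h'')

theorem Adj.symm {D : Dag V} {a b : V} (h : D.Adj a b) : D.Adj b a := Or.symm h

/-- Ancestors of `S`. -/
def AnS (D : Dag V) (S : Set V) (v : V) : Prop := ∃ s ∈ S, D.Anc v s

theorem Reach.coll_anS {D : Dag V} {S : Set V} {x s : V} (hs : s ∈ S) {c : V}
    (h : D.Anc c s) : ∀ w, Reach D S x c true → D.edge w c → Reach D S x w false := by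
  induction h using Relation.ReflTransGen.head_induction_on with
  | refl => intro w h1 h2; exact h1.coll h2 hs
  | head hcd hrest ih =>
    rename_i c d
    intro w h1 h2
    by_cases hc : c ∈ S
    · exact h1.coll h2 hc
    · exact (ih c (h1.down hcd hc) hcd).up h2 hc

/-- collider at position `i+1` of a sequence -/
def Col (D : Dag V) (f : ℕ → V) (i : ℕ) : Prop :=
  D.edge (f i) (f (i + 1)) ∧ D.edge (f (i + 2)) (f (i + 1))

/-- active path with `n` edges, starting in `x`, given as a sequence -/
structure APath (D : Dag V) (S : Set V) (x : V) (n : ℕ) (f : ℕ → V) : Prop where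
  zero : f 0 = x
  inj : ∀ i j, i ≤ n → j ≤ n → f i = f j → i = j
  adj : ∀ i, i < n → D.Adj (f i) (f (i + 1))
  col : ∀ i, i + 1 < n → D.Col f i → D.AnS S (f (i + 1))
  ncol : ∀ i, i + 1 < n → ¬ D.Col f i → f (i + 1) ∉ S

theorem not_dSep_iff_aPath (D : Dag V) (S : Set V) (x y : V) :
    ¬ D.dSep x y S ↔ ∃ n f, D.APath S x n f ∧ f n = y := by
  constructor
  · intro h
    unfold dSep at h
    push Not at h
    obtain ⟨p, hp⟩ := h
    have hb := hp
    unfold GPath.Blocked at hb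
    push Not at hb
    let f : ℕ → V := fun i => if h : i < p.n + 1 then p.f ⟨i, h⟩ else x
    have hf : ∀ i (h : i < p.n + 1), f i = p.f ⟨i, h⟩ := fun i h => dif_pos h
    have hcol : ∀ i, i + 1 < p.n → (p.ColliderAt D.edge (i + 1) ↔ D.Col f i) := by
      intro i hi
      unfold GPath.ColliderAt Col
      rw [hf i (by omega), hf (i + 1) (by omega), hf (i + 2) (by omega)]
      constructor
      · rintro ⟨_, _, h⟩
        exact h
      · intro h
        exact ⟨by omega, hi, h⟩
    refine ⟨p.n, f, ⟨?_, ?_, ?_, ?_, ?_⟩, ?_⟩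
    · rw [hf 0 (by omega)]; exact p.first
    · intro i j hi hj h
      rw [hf i (by omega), hf j (by omega)] at h
      simpa using p.inj h
    · intro i hi
      rw [hf i (by omega), hf (i + 1) (by omega)]
      exact p.adj ⟨i, hi⟩
    · intro i hi hc
      obtain ⟨d, h1, h2⟩ := (hb (i + 1) (by omega) hi).2 ((hcol i hi).2 hc)
      refine ⟨d, h2, ?_⟩
      rw [hf (i + 1) (by omega)]; exact h1
    · intro i hi hc
      rw [hf (i + 1) (by omega)]
      exact (hb (i + 1) (by omega) hi).1 (fun h => hc ((hcol i hi).1 h))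
    · rw [hf p.n (by omega)]; exact p.last
  · rintro ⟨n, f, hf, hy⟩ hd
    let p : GPath D.Adj x y :=
      { n := n
        f := fun i => f i
        inj := fun i j h => Fin.ext (hf.inj i j (by omega) (by omega) h)
        first := hf.zero
        last := hy
        adj := fun i => hf.adj i i.2 }
    obtain ⟨i, h0, hi, h⟩ := hd p
    obtain ⟨i, rfl⟩ : ∃ j, i = j + 1 := ⟨i - 1, by omega⟩
    have hcol : p.ColliderAt D.edge (i + 1) ↔ D.Col f i := by
      constructor
      · rintro ⟨_, _, h⟩
        exact h
      · intro h
        exact ⟨by omega, hi, h⟩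
    rcases h with ⟨h1, h2⟩ | ⟨h1, h2⟩
    · exact hf.ncol i hi (fun h => h1 (hcol.2 h)) h2
    · obtain ⟨s, hs, ha⟩ := hf.col i hi (hcol.1 h1)
      exact h2 s ha hs

theorem APath.trunc {D : Dag V} {S : Set V} {x : V} {n : ℕ} {f : ℕ → V}
    (h : D.APath S x n f) {m : ℕ} (hm : m ≤ n) : D.APath S x m f :=
  ⟨h.zero, fun i j hi hj => h.inj i j (by omega) (by omega), fun i hi => h.adj i (by omega),
    fun i hi => h.col i (by omega), fun i hi => h.ncol i (by omega)⟩

/-- Active paths give active walks. -/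
theorem APath.reach {D : Dag V} {S : Set V} {x : V} {n : ℕ} {f : ℕ → V}
    (h : D.APath S x n f) : ∀ i, i < n →
      (D.edge (f i) (f (i + 1)) → Reach D S x (f (i + 1)) true) ∧
      (D.edge (f (i + 1)) (f i) → Reach D S x (f (i + 1)) false) := by
  intro i
  induction i with
  | zero =>
    intro hi
    rw [h.zero]
    exact ⟨Reach.startOut, Reach.startIn⟩
  | succ i ih =>
    intro hi
    obtain ⟨ih1, ih2⟩ := ih (by omega)
    have hadj := h.adj i (by omega)
    constructor
    · intro he
      have hn : ¬ D.Col f i := fun hc => D.edge_asymm he hc.2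
      have := h.ncol i hi hn
      rcases hadj with ha | ha
      · exact (ih1 ha).down he this
      · exact (ih2 ha).down he this
    · intro he
      rcases hadj with ha | ha
      · obtain ⟨s, hs, hanc⟩ := h.col i hi ⟨ha, he⟩
        exact Reach.coll_anS hs hanc _ (ih1 ha) he
      · have hn : ¬ D.Col f i := fun hc => D.edge_asymm ha hc.1
        exact (ih2 ha).up he (h.ncol i hi hn)

/-- Following a path that leaves `f i` with an outgoing edge and ends in `f n` with the
last edge out of the end (closing up): there is a collider below `f i`. -/
theorem APath.anS_of_out {D : Dag V} {S : Set V} {x : V} {n : ℕ} {f : ℕ → V}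
    (h : D.APath S x n f) (i k : ℕ) (hk : i + k + 1 ≤ n) (he : D.edge (f i) (f (i + 1))) :
    D.AnS S (f i) ∨ (D.Anc (f i) (f (i + k + 1)) ∧ D.edge (f (i + k)) (f (i + k + 1))) := by
  induction k with
  | zero => exact Or.inr ⟨Relation.ReflTransGen.single he, he⟩
  | succ k ih =>
    rcases ih (by omega) with h1 | ⟨h1, h2⟩
    · exact Or.inl h1
    · rcases h.adj (i + k + 1) (by omega) with h3 | h3
      · exact Or.inr ⟨h1.tail h3, h3⟩
      · obtain ⟨s, hs, hanc⟩ := h.col (i + k) (by omega) ⟨h2, h3⟩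
        exact Or.inl ⟨s, hs, Relation.ReflTransGen.trans h1 hanc⟩

/-- End of path states. -/
def EndIn (D : Dag V) (S : Set V) (x v : V) : Prop :=
  ∃ n f, D.APath S x (n + 1) f ∧ f (n + 1) = v ∧ D.edge (f n) v

def EndOut (D : Dag V) (S : Set V) (x v : V) : Prop :=
  ∃ n f, D.APath S x (n + 1) f ∧ f (n + 1) = v ∧ D.edge v (f n)

/-- The invariant for shortening active walks to active paths. -/
def Inv (D : Dag V) (S : Set V) (x v : V) : Bool → Prop
  | true => v = x ∨ D.EndIn S x v ∨ (D.EndOut S x v ∧ v ∉ S)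
  | false => v = x ∨ D.EndOut S x v ∨ (D.EndIn S x v ∧ D.AnS S v)

/-- One step extension of an active path. -/
theorem inv_step {D : Dag V} {S : Set V} {x w : V} {n : ℕ} {f : ℕ → V}
    (h : D.APath S x (n + 1) f) (hadj : D.Adj (f (n + 1)) w)
    (hc : D.edge (f n) (f (n + 1)) → D.edge w (f (n + 1)) → D.AnS S (f (n + 1)))
    (hn : (D.edge (f n) (f (n + 1)) → ¬ D.edge w (f (n + 1))) → f (n + 1) ∉ S) :
    (D.edge (f (n + 1)) w → D.Inv S x w true) ∧
    (D.edge w (f (n + 1)) → D.Inv S x w false) := by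
  by_cases hw : ∃ i, i ≤ n + 1 ∧ f i = w
  · obtain ⟨i, hi, rfl⟩ := hw
    rcases Nat.eq_zero_or_pos i with h0 | h0
    · subst h0
      exact ⟨fun _ => Or.inl h.zero, fun _ => Or.inl h.zero⟩
    obtain ⟨i, rfl⟩ : ∃ j, i = j + 1 := ⟨i - 1, by omega⟩
    have hlt : i + 1 < n + 1 := by
      rcases Nat.lt_or_ge (i + 1) (n + 1) with h1 | h1
      · exact h1
      · have : i = n := by omega
        subst this
        rcases hadj with h2 | h2 <;> exact absurd h2 (D.edge_irrefl _)
    have ht := h.trunc (m := i + 1) (by omega)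
    rcases h.adj i (by omega) with h1 | h1
    · have hin : D.EndIn S x (f (i + 1)) := ⟨i, f, ht, rfl, h1⟩
      refine ⟨fun _ => Or.inr (Or.inl hin), fun he => Or.inr (Or.inr ⟨hin, ?_⟩)⟩
      rcases h.adj (i + 1) hlt with h2 | h2
      · obtain ⟨k, rfl⟩ : ∃ k, n = i + 1 + k := ⟨n - (i + 1), by omega⟩
        rcases h.anS_of_out (i + 1) k (by omega) h2 with h3 | ⟨h3, h4⟩
        · exact h3
        · obtain ⟨s, hs, ha⟩ := hc h4 he
          exact ⟨s, hs, Relation.ReflTransGen.trans h3 ha⟩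
      · exact h.col i hlt ⟨h1, h2⟩
    · have hout : D.EndOut S x (f (i + 1)) := ⟨i, f, ht, rfl, h1⟩
      refine ⟨fun _ => Or.inr (Or.inr ⟨hout, ?_⟩), fun he => Or.inr (Or.inl hout)⟩
      exact h.ncol i hlt (fun hcc => D.edge_asymm h1 hcc.1)
  · push Not at hw
    let g : ℕ → V := fun i => if i ≤ n + 1 then f i else w
    have hg : ∀ i, i ≤ n + 1 → g i = f i := fun i hi => by simp [g, hi]
    have hg' : g (n + 2) = w := by simp [g]
    have hcol : ∀ i, i + 2 ≤ n + 1 → (D.Col g i ↔ D.Col f i) := by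
      intro i hi
      unfold Col
      rw [hg i (by omega), hg (i + 1) (by omega), hg (i + 2) (by omega)]
    have hcoln : D.Col g n ↔ (D.edge (f n) (f (n + 1)) ∧ D.edge w (f (n + 1))) := by
      unfold Col
      rw [hg n (by omega), hg (n + 1) (by omega), hg']
    have key : D.APath S x (n + 2) g := by
      refine ⟨?_, ?_, ?_, ?_, ?_⟩
      · rw [hg 0 (by omega), h.zero]
      · intro i j hi hj he
        rcases Nat.lt_or_ge (n + 1) i with h1 | h1 <;> rcases Nat.lt_or_ge (n + 1) j with h2 | h2
        · omega
        · have : i = n + 2 := by omega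
          subst this
          rw [hg', hg j h2] at he
          exact absurd he.symm (hw j h2)
        · have : j = n + 2 := by omega
          subst this
          rw [hg', hg i h1] at he
          exact absurd he (hw i h1)
        · rw [hg i h1, hg j h2] at he
          exact h.inj i j h1 h2 he
      · intro i hi
        rcases Nat.lt_or_ge i (n + 1) with h1 | h1
        · rw [hg i (by omega), hg (i + 1) (by omega)]
          exact h.adj i h1
        · have : i = n + 1 := by omega
          subst this
          rw [hg (n + 1) le_rfl, hg']
          exact hadj
      · intro i hi hcc
        rw [hg (i + 1) (by omega)]
        rcases Nat.lt_or_ge i n with h1 | h1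
        · exact h.col i (by omega) ((hcol i (by omega)).1 hcc)
        · have : i = n := by omega
          subst this
          exact hc (hcoln.1 hcc).1 (hcoln.1 hcc).2
      · intro i hi hcc
        rw [hg (i + 1) (by omega)]
        rcases Nat.lt_or_ge i n with h1 | h1
        · exact h.ncol i (by omega) (fun hh => hcc ((hcol i (by omega)).2 hh))
        · have : i = n := by omega
          subst this
          exact hn (fun ha hb => hcc (hcoln.2 ⟨ha, hb⟩))
    refine ⟨fun he => Or.inr (Or.inl ⟨n + 1, g, key, hg', ?_⟩),
      fun he => Or.inr (Or.inl ⟨n + 1, g, key, hg', ?_⟩)⟩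
    · rw [hg (n + 1) le_rfl]; exact he
    · rw [hg (n + 1) le_rfl]; exact he

theorem inv_start {D : Dag V} {S : Set V} {x v : V} :
    (D.edge x v → D.Inv S x v true) ∧ (D.edge v x → D.Inv S x v false) := by
  have key : D.Adj x v → D.APath S x 1 (fun i => if i = 0 then x else v) := by
    intro h
    have hne : x ≠ v := by
      rintro rfl
      rcases h with h | h <;> exact D.edge_irrefl _ h
    refine ⟨by simp, ?_, ?_, ?_, ?_⟩
    · intro i j hi hj he
      have : i = 0 ∨ i = 1 := by omega
      have : j = 0 ∨ j = 1 := by omega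
      rcases ‹i = 0 ∨ i = 1› with rfl | rfl <;> rcases ‹j = 0 ∨ j = 1› with rfl | rfl <;>
        simp_all
    · intro i hi
      have : i = 0 := by omega
      subst this
      simpa using h
    · intro i hi; omega
    · intro i hi; omega
  exact ⟨fun h => Or.inr (Or.inl ⟨0, _, key (Or.inl h), by simp, by simpa using h⟩),
    fun h => Or.inr (Or.inl ⟨0, _, key (Or.inr h), by simp, by simpa using h⟩)⟩

theorem Reach.inv {D : Dag V} {S : Set V} {x v : V} {b : Bool} (h : Reach D S x v b) :
    D.Inv S x v b := by
  induction h with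
  | startOut h => exact inv_start.1 h
  | startIn h => exact inv_start.2 h
  | down _ he hS ih =>
    rename_i v w b _
    have hcase : v = x ∨ D.EndIn S x v ∨ D.EndOut S x v := by
      cases b <;> simp only [Inv] at ih <;> tauto
    rcases hcase with rfl | ⟨n, f, hf, rfl, h1⟩ | ⟨n, f, hf, rfl, h1⟩
    · exact inv_start.1 he
    · exact (inv_step hf (Or.inl he) (fun _ h3 => absurd h3 (D.edge_asymm he))
        (fun _ => hS)).1 he
    · exact (inv_step hf (Or.inl he) (fun _ h3 => absurd h3 (D.edge_asymm he))
        (fun _ => hS)).1 he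
  | up _ he hS ih =>
    rcases ih with rfl | ⟨n, f, hf, rfl, h1⟩ | ⟨⟨n, f, hf, rfl, h1⟩, h2⟩
    · exact inv_start.2 he
    · exact (inv_step hf (Or.inr he) (fun h3 _ => absurd h3 (D.edge_asymm h1))
        (fun _ => hS)).2 he
    · exact (inv_step hf (Or.inr he) (fun _ _ => h2) (fun _ => hS)).2 he
  | coll _ he hS ih =>
    rcases ih with rfl | ⟨n, f, hf, rfl, h1⟩ | ⟨⟨n, f, hf, rfl, h1⟩, h2⟩
    · exact inv_start.2 he
    · exact (inv_step hf (Or.inr he) (fun _ _ => ⟨_, hS, Relation.ReflTransGen.refl⟩)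
        (fun h3 => absurd he (h3 h1))).2 he
    · exact absurd hS h2

theorem not_dSep_iff (D : Dag V) (S : Set V) (x y : V) :
    ¬ D.dSep x y S ↔ y = x ∨ ∃ b, Reach D S x y b := by
  rw [not_dSep_iff_aPath]
  constructor
  · rintro ⟨n, f, hf, rfl⟩
    rcases n with _ | n
    · exact Or.inl hf.zero
    · right
      rcases hf.adj n (by omega) with h | h
      · exact ⟨_, (hf.reach n (by omega)).1 h⟩
      · exact ⟨_, (hf.reach n (by omega)).2 h⟩
  · have h0 : y = x → ∃ n f, D.APath S x n f ∧ f n = y := by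
      rintro rfl
      exact ⟨0, fun _ => y, ⟨rfl, fun i j hi hj _ => by omega, fun i hi => by omega,
        fun i hi => by omega, fun i hi => by omega⟩, rfl⟩
    rintro (h | ⟨b, h⟩)
    · exact h0 h
    · have hi := h.inv
      have hcase : y = x ∨ D.EndIn S x y ∨ D.EndOut S x y := by
        cases b <;> simp only [Inv] at hi <;> tauto
      rcases hcase with h | ⟨n, f, hf, h1, -⟩ | ⟨n, f, hf, h1, -⟩
      · exact h0 h
      · exact ⟨_, f, hf, h1⟩
      · exact ⟨_, f, hf, h1⟩

/-! ### Covered edge reversal -/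

/-- `D'` arises from `D` by reversing the covered edge `a → b`. -/
structure Rev (D D' : Dag V) (a b : V) : Prop where
  ab : D.edge a b
  ba : D'.edge b a
  par : ∀ u, u ≠ a → (D.edge u b ↔ D.edge u a)
  same : ∀ u v, ¬ (u = a ∧ v = b) → ¬ (u = b ∧ v = a) → (D'.edge u v ↔ D.edge u v)

/-- simulation invariant -/
def Sim (D' : Dag V) (S : Set V) (x a b v : V) (h : Bool) : Prop :=
  v = x ∨
  (v ≠ a ∧ v ≠ b ∧ Reach D' S x v h) ∨
  (v = a ∧ h = true ∧ Reach D' S x a true ∧ Reach D' S x b true) ∨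
  (v = b ∧ h = false ∧ Reach D' S x b false) ∨
  (v = b ∧ h = true ∧ (a = x ∨ (Reach D' S x a true ∧ Reach D' S x b true) ∨
    (a ∉ S ∧ Reach D' S x a false) ∨ (b ∉ S ∧ Reach D' S x b false))) ∨
  (v = a ∧ h = false ∧ (b = x ∨ Reach D' S x a false ∨
    (Reach D' S x a true ∧ Reach D' S x b true ∧ b ∈ S) ∨ (b ∉ S ∧ Reach D' S x b false)))

end Dag

namespace Dag

theorem Rev.ne {D D' : Dag V} {a b : V} (h : Rev D D' a b) : a ≠ b := by
  rintro rfl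
  exact D.edge_irrefl _ h.ab

theorem Rev.sim_down {D D' : Dag V} {a b : V} (hr : Rev D D' a b) {S : Set V} {x v w : V}
    {h : Bool} (hs : Sim D' S x a b v h) (he : D.edge v w) (hS : v = x ∨ v ∉ S) :
    Sim D' S x a b w true := by
  have hne := hr.ne
  have hvw : v ≠ w := by rintro rfl; exact D.edge_irrefl _ he
  by_cases hva : v = a
  · subst hva
    by_cases hwb : w = b
    · subst hwb
      unfold Sim at hs ⊢
      grind
    · have he' : D'.edge v w := (hr.same v w (by tauto) (by tauto)).2 he
      have hba := hr.ba
      have hw : Reach D' S x w true := by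
        by_cases hx : v = x
        · subst hx; exact .startOut he'
        have hvS : v ∉ S := by tauto
        have : ∃ c, Reach D' S x v c := by
          by_cases hb : b = x
          · subst hb; exact ⟨_, .startOut hba⟩
          · by_cases hbR : b ∉ S ∧ Reach D' S x b false
            · exact ⟨_, hbR.2.down hba hbR.1⟩
            · unfold Sim at hs
              grind
        obtain ⟨c, hc⟩ := this
        exact hc.down he' hvS
      exact Or.inr (Or.inl ⟨Ne.symm hvw, hwb, hw⟩)
  by_cases hvb : v = b
  · subst hvb
    have hwa : w ≠ a := by rintro rfl; exact D.edge_asymm hr.ab he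
    have he' : D'.edge v w := (hr.same v w (by tauto) (by tauto)).2 he
    have hab : D'.edge v a := hr.ba
    have hw : Reach D' S x w true := by
      by_cases hx : v = x
      · subst hx; exact .startOut he'
      have hvS : v ∉ S := by tauto
      have : ∃ c, Reach D' S x v c := by
        by_cases hb : a = x
        · subst hb; exact ⟨_, .startIn hab⟩
        · by_cases hbR : a ∉ S ∧ Reach D' S x a false
          · exact ⟨_, hbR.2.up hab hbR.1⟩
          · unfold Sim at hs
            grind
      obtain ⟨c, hc⟩ := this
      exact hc.down he' hvS
    exact Or.inr (Or.inl ⟨hwa, Ne.symm hvw, hw⟩)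
  have emit : ∀ u, D.edge v u → Reach D' S x u true := by
    intro u hu
    have he' : D'.edge v u := (hr.same v u (by tauto) (by tauto)).2 hu
    by_cases hx : v = x
    · subst hx; exact .startOut he'
    have hvS : v ∉ S := by tauto
    have : Reach D' S x v h := by
      unfold Sim at hs
      grind
    exact this.down he' hvS
  have hpar := hr.par v hva
  have := emit w he
  have ha : D.edge v a → Reach D' S x a true := emit a
  have hb : D.edge v b → Reach D' S x b true := emit b
  unfold Sim
  grind

theorem Rev.sim_up {D D' : Dag V} {a b : V} (hr : Rev D D' a b) {S : Set V} {x v w : V}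
    {h : Bool} (hs : Sim D' S x a b v h) (he : D.edge w v)
    (hS : v = x ∨ (h = false ∧ v ∉ S) ∨ (h = true ∧ v ∈ S)) :
    Sim D' S x a b w false := by
  have hne := hr.ne
  have hvw : v ≠ w := by rintro rfl; exact D.edge_irrefl _ he
  by_cases hva : v = a
  · subst hva
    have hwb : w ≠ b := by rintro rfl; exact D.edge_asymm hr.ab he
    have he' : D'.edge w v := (hr.same w v (by tauto) (by tauto)).2 he
    have heb : D'.edge w b :=
      (hr.same w b (by tauto) (by tauto)).2 ((hr.par w (Ne.symm hvw)).2 he)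
    have hw : Reach D' S x w false := by
      by_cases hx : v = x
      · subst hx; exact .startIn he'
      by_cases hbx : b = x
      · subst hbx; exact .startIn heb
      have h1 : Reach D' S x v false → v ∉ S → Reach D' S x w false := fun p q => p.up he' q
      have h2 : Reach D' S x b false → b ∉ S → Reach D' S x w false := fun p q => p.up heb q
      have h3 : Reach D' S x v true → v ∈ S → Reach D' S x w false := fun p q => p.coll he' q
      have h4 : Reach D' S x b true → b ∈ S → Reach D' S x w false := fun p q => p.coll heb q
      unfold Sim at hs
      grind
    exact Or.inr (Or.inl ⟨Ne.symm hvw, hwb, hw⟩)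
  by_cases hvb : v = b
  · subst hvb
    by_cases hwa : w = a
    · subst hwa
      unfold Sim at hs ⊢
      grind
    have he' : D'.edge w v := (hr.same w v (by tauto) (by tauto)).2 he
    have hea : D'.edge w a :=
      (hr.same w a (by tauto) (by tauto)).2 ((hr.par w hwa).1 he)
    have hw : Reach D' S x w false := by
      by_cases hx : v = x
      · subst hx; exact .startIn he'
      by_cases hbx : a = x
      · subst hbx; exact .startIn hea
      have h1 : Reach D' S x v false → v ∉ S → Reach D' S x w false := fun p q => p.up he' q
      have h2 : Reach D' S x a false → a ∉ S → Reach D' S x w false := fun p q => p.up hea q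
      have h3 : Reach D' S x v true → v ∈ S → Reach D' S x w false := fun p q => p.coll he' q
      unfold Sim at hs
      grind
    exact Or.inr (Or.inl ⟨hwa, Ne.symm hvw, hw⟩)
  have he' : D'.edge w v := (hr.same w v (by tauto) (by tauto)).2 he
  have hw : Reach D' S x w false := by
    by_cases hx : v = x
    · subst hx; exact .startIn he'
    have h1 : Reach D' S x v false → v ∉ S → Reach D' S x w false := fun p q => p.up he' q
    have h3 : Reach D' S x v true → v ∈ S → Reach D' S x w false := fun p q => p.coll he' q
    unfold Sim at hs
    grind
  unfold Sim
  grind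

theorem Rev.sim {D D' : Dag V} {a b : V} (hr : Rev D D' a b) {S : Set V} {x v : V}
    {h : Bool} (hR : Reach D S x v h) : Sim D' S x a b v h := by
  induction hR with
  | startOut he => exact hr.sim_down (v := x) (h := true) (Or.inl rfl) he (Or.inl rfl)
  | startIn he => exact hr.sim_up (v := x) (h := true) (Or.inl rfl) he (Or.inl rfl)
  | down _ he hS ih => exact hr.sim_down ih he (Or.inr hS)
  | up _ he hS ih => exact hr.sim_up ih he (Or.inr (Or.inl ⟨rfl, hS⟩))
  | coll _ he hS ih => exact hr.sim_up ih he (Or.inr (Or.inr ⟨rfl, hS⟩))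

theorem Rev.conn {D D' : Dag V} {a b : V} (hr : Rev D D' a b) {S : Set V} {x y : V}
    (h : ¬ D.dSep x y S) : ¬ D'.dSep x y S := by
  rw [not_dSep_iff] at h ⊢
  rcases h with h | ⟨c, h⟩
  · exact Or.inl h
  · have hs := hr.sim h
    have hba := hr.ba
    have h1 : a = x → ∃ c, Reach D' S x b c := by rintro rfl; exact ⟨_, .startIn hba⟩
    have h2 : b = x → ∃ c, Reach D' S x a c := by rintro rfl; exact ⟨_, .startOut hba⟩
    have h3 : a ∉ S → Reach D' S x a false → ∃ c, Reach D' S x b c :=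
      fun p q => ⟨_, q.up hba p⟩
    have h4 : b ∉ S → Reach D' S x b false → ∃ c, Reach D' S x a c :=
      fun p q => ⟨_, q.down hba p⟩
    unfold Sim at hs
    grind

theorem Rev.symm {D D' : Dag V} {a b : V} (hr : Rev D D' a b) : Rev D' D b a := by
  have hne := hr.ne
  refine ⟨hr.ba, hr.ab, ?_, ?_⟩
  · intro u hu
    by_cases hua : u = a
    · subst hua
      exact ⟨fun h => absurd h (D'.edge_irrefl _), fun h => absurd h (D'.edge_asymm hr.ba)⟩
    · rw [hr.same u a (by tauto) (by tauto), hr.same u b (by tauto) (by tauto), hr.par u hua]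
  · intro u v h1 h2
    rw [hr.same u v (by tauto) (by tauto)]

theorem Rev.mEquiv {D D' : Dag V} {a b : V} (hr : Rev D D' a b) : D.MEquiv D' :=
  fun _ _ _ => ⟨fun h => by_contra fun h' => hr.symm.conn h' h,
    fun h => by_contra fun hcon => hr.conn hcon h⟩

/-- Existence of the reversal of a covered edge. -/
theorem exists_rev (D : Dag V) {a b : V} (hab : D.edge a b)
    (hpar : ∀ u, u ≠ a → (D.edge u b ↔ D.edge u a)) : ∃ D' : Dag V, Rev D D' a b := by
  have hne : a ≠ b := by rintro rfl; exact D.edge_irrefl _ hab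
  let E0 : V → V → Prop := fun u v => D.edge u v ∧ ¬ (u = a ∧ v = b)
  let E : V → V → Prop := fun u v => E0 u v ∨ (u = b ∧ v = a)
  have hpath : ∀ u v, Relation.ReflTransGen E u v →
      Relation.ReflTransGen E0 u v ∨
        (Relation.ReflTransGen E0 u b ∧ Relation.ReflTransGen E0 a v) := by
    intro u v h
    induction h with
    | refl => exact Or.inl Relation.ReflTransGen.refl
    | tail _ he ih =>
      rcases he with he | ⟨rfl, rfl⟩
      · rcases ih with ih | ⟨ih1, ih2⟩
        · exact Or.inl (ih.tail he)
        · exact Or.inr ⟨ih1, ih2.tail he⟩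
      · rcases ih with ih | ⟨ih1, ih2⟩
        · exact Or.inr ⟨ih, Relation.ReflTransGen.refl⟩
        · exact Or.inr ⟨ih1, Relation.ReflTransGen.refl⟩
  have hE0 : ∀ u v, Relation.ReflTransGen E0 u v → D.Anc u v :=
    fun u v h => Relation.ReflTransGen.mono (r := E0) (p := D.edge) (fun _ _ h => h.1) u v h
  have hno : ¬ Relation.ReflTransGen E0 a b := by
    intro h
    rcases Relation.ReflTransGen.cases_tail h with h | ⟨z, hz, he⟩
    · exact hne h.symm
    · have hza : z ≠ a := fun h => he.2 ⟨h, rfl⟩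
      exact D.acyclic z a ((hpar z hza).1 he.1) (hE0 _ _ hz)
  refine ⟨⟨E, ?_⟩, hab, Or.inr ⟨rfl, rfl⟩, hpar, ?_⟩
  · intro u v he hp
    rcases he with he | ⟨rfl, rfl⟩
    · rcases hpath _ _ hp with h | ⟨h1, h2⟩
      · exact D.acyclic u v he.1 (hE0 _ _ h)
      · exact hno ((h2.tail he).trans h1)
    · rcases hpath _ _ hp with h | ⟨h1, h2⟩
      · exact hno h
      · exact hno h1
  · intro u v h1 h2
    constructor
    · rintro (h | h)
      · exact h.1
      · exact absurd h h2
    · intro h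
      exact Or.inl ⟨h, h1⟩

end Dag

namespace Dag

/-- Same skeleton and same v-structures. -/
structure Same (D D' : Dag V) : Prop where
  adj : ∀ a b, D.Adj a b ↔ D'.Adj a b
  vs : ∀ a b c, a ≠ b → ¬ D.Adj a b → (D.edge a c ∧ D.edge b c ↔ D'.edge a c ∧ D'.edge b c)

theorem Same.symm {D D' : Dag V} (h : Same D D') : Same D' D :=
  ⟨fun a b => (h.adj a b).symm,
    fun a b c hab hn => (h.vs a b c hab (fun h' => hn ((h.adj a b).1 h'))).symm⟩

theorem Same.trans {D D' D'' : Dag V} (h : Same D D') (h' : Same D' D'') : Same D D'' :=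
  ⟨fun a b => (h.adj a b).trans (h'.adj a b),
    fun a b c hab hn => (h.vs a b c hab hn).trans
      (h'.vs a b c hab (fun h1 => hn ((h.adj a b).2 h1)))⟩

theorem Rev.adj_iff {D D' : Dag V} {a b : V} (hr : Rev D D' a b) (u v : V) :
    D.Adj u v ↔ D'.Adj u v := by
  by_cases h1 : u = a ∧ v = b
  · obtain ⟨rfl, rfl⟩ := h1
    exact ⟨fun _ => Or.inr hr.ba, fun _ => Or.inl hr.ab⟩
  by_cases h2 : u = b ∧ v = a
  · obtain ⟨rfl, rfl⟩ := h2
    exact ⟨fun _ => Or.inl hr.ba, fun _ => Or.inr hr.ab⟩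
  unfold Adj
  rw [hr.same u v h1 h2, hr.same v u (by tauto) (by tauto)]

theorem Rev.vs_imp {D D' : Dag V} {a b : V} (hr : Rev D D' a b) {u v w : V} (hne : u ≠ v)
    (hn : ¬ D.Adj u v) (h1 : D.edge u w) (h2 : D.edge v w) : D'.edge u w ∧ D'.edge v w := by
  have key : ∀ u v, u ≠ v → ¬ D.Adj u v → D.edge u w → D.edge v w → D'.edge u w := by
    intro u v hne hn h1 h2
    by_cases hc : u = a ∧ w = b
    · obtain ⟨rfl, rfl⟩ := hc
      exact absurd (Or.inr ((hr.par v hne.symm).1 h2)) hn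
    · refine (hr.same u w hc ?_).2 h1
      rintro ⟨rfl, rfl⟩
      exact D.edge_asymm hr.ab h1
  exact ⟨key u v hne hn h1 h2, key v u hne.symm (fun h => hn h.symm) h2 h1⟩

theorem Rev.same' {D D' : Dag V} {a b : V} (hr : Rev D D' a b) : Same D D' :=
  ⟨hr.adj_iff, fun _ _ _ hne hn => ⟨fun h => hr.vs_imp hne hn h.1 h.2,
    fun h => hr.symm.vs_imp hne (fun h' => hn ((hr.adj_iff _ _).2 h')) h.1 h.2⟩⟩

theorem transGen_irrefl (D : Dag V) (a : V) : ¬ Relation.TransGen D.edge a a := by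
  intro h
  obtain ⟨b, h1, h2⟩ := Relation.TransGen.head'_iff.1 h
  exact D.acyclic a b h1 h2

theorem exists_min [Finite V] (D : Dag V) (P : V → Prop) (h : ∃ v, P v) :
    ∃ v, P v ∧ ∀ w, P w → ¬ Relation.TransGen D.edge w v := by
  have : IsTrans V (Relation.TransGen D.edge) := ⟨fun _ _ _ => Relation.TransGen.trans⟩
  have : Std.Irrefl (Relation.TransGen D.edge) := ⟨D.transGen_irrefl⟩
  have wf := Finite.wellFounded_of_trans_of_irrefl (Relation.TransGen D.edge)
  obtain ⟨m, hm, hmin⟩ := wf.has_min {v | P v} h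
  exact ⟨m, hm, hmin⟩

theorem exists_max [Finite V] (D : Dag V) (P : V → Prop) (h : ∃ v, P v) :
    ∃ v, P v ∧ ∀ w, P w → ¬ Relation.TransGen D.edge v w := by
  have : IsTrans V (Function.swap (Relation.TransGen D.edge)) :=
    ⟨fun _ _ _ h h' => Relation.TransGen.trans h' h⟩
  have : Std.Irrefl (Function.swap (Relation.TransGen D.edge)) := ⟨D.transGen_irrefl⟩
  have wf := Finite.wellFounded_of_trans_of_irrefl (Function.swap (Relation.TransGen D.edge))
  obtain ⟨m, hm, hmin⟩ := wf.has_min {v | P v} h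
  exact ⟨m, hm, hmin⟩

/-- Chickering: a covered edge among the edges on which two equivalent DAGs disagree. -/
theorem Same.exists_covered [Finite V] {D D' : Dag V} (hs : Same D D')
    (hex : ∃ a b, D.edge a b ∧ D'.edge b a) :
    ∃ a b, D.edge a b ∧ D'.edge b a ∧ ∀ u, u ≠ a → (D.edge u b ↔ D.edge u a) := by
  obtain ⟨y, ⟨x0, hx0⟩, hy⟩ := D.exists_min (fun y => ∃ x, D.edge x y ∧ D'.edge y x)
    (by obtain ⟨a, b, h⟩ := hex; exact ⟨b, a, h⟩)
  obtain ⟨x, ⟨hx, hx'⟩, hmax⟩ := D.exists_max (fun x => D.edge x y ∧ D'.edge y x) ⟨x0, hx0⟩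
  have hkeep : ∀ u v, Relation.TransGen D.edge v y → D.edge u v → D'.edge u v := by
    intro u v hv he
    rcases (hs.adj u v).1 (Or.inl he) with h | h
    · exact h
    · exact absurd hv (hy v ⟨u, he, h⟩)
  refine ⟨x, y, hx, hx', fun u hu => ⟨fun h => ?_, fun h => ?_⟩⟩
  · by_cases hadj : D.Adj u x
    · rcases hadj with h1 | h1
      · exact h1
      · exfalso
        have h2 : D'.edge u y := by
          rcases (hs.adj u y).1 (Or.inl h) with h3 | h3
          · exact h3
          · exact absurd (Relation.TransGen.single h1) (hmax u ⟨h, h3⟩)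
        have h3 := hkeep x u (Relation.TransGen.single h) h1
        exact D'.edge_trans_not h2 hx' h3
    · exact absurd ((hs.vs u x y hu hadj).1 ⟨h, hx⟩).2 (D'.edge_asymm hx')
  · have h1 := hkeep u x (Relation.TransGen.single hx) h
    have huy : u ≠ y := by rintro rfl; exact D.edge_asymm hx h
    by_cases hadj : D.Adj u y
    · rcases hadj with h2 | h2
      · exact h2
      · exact absurd h2 (D.edge_trans_not h hx)
    · exact absurd ((hs.vs u y x huy hadj).2 ⟨h1, hx'⟩).2 (D.edge_asymm hx)

theorem Same.eq_of_not_exists {D D' : Dag V} (hs : Same D D')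
    (hex : ¬ ∃ a b, D.edge a b ∧ D'.edge b a) : D = D' := by
  have : D.edge = D'.edge := by
    funext u v
    apply propext
    constructor
    · intro h
      rcases (hs.adj u v).1 (Or.inl h) with h1 | h1
      · exact h1
      · exact absurd ⟨u, v, h, h1⟩ hex
    · intro h
      rcases (hs.adj u v).2 (Or.inl h) with h1 | h1
      · exact h1
      · exact absurd ⟨v, u, h1, h⟩ hex
  cases D; cases D'
  simp_all only

/-- Verma and Pearl, sufficiency. -/
theorem Same.mEquiv [Finite V] {D D' : Dag V} (hs : Same D D') : D.MEquiv D' := by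
  suffices H : ∀ n, ∀ D : Dag V, Same D D' →
      {q : V × V | D.edge q.1 q.2 ∧ D'.edge q.2 q.1}.ncard = n → D.MEquiv D' from
    H _ D hs rfl
  intro n
  induction n using Nat.strong_induction_on with
  | _ n ih =>
    intro D hs hn
    by_cases hex : ∃ a b, D.edge a b ∧ D'.edge b a
    · obtain ⟨a, b, hab, hba, hpar⟩ := hs.exists_covered hex
      obtain ⟨D1, hr⟩ := D.exists_rev hab hpar
      have hlt : {q : V × V | D1.edge q.1 q.2 ∧ D'.edge q.2 q.1}.ncard < n := by
        rw [← hn]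
        apply Set.ncard_lt_ncard _ (Set.toFinite _)
        rw [Set.ssubset_iff_of_subset]
        · exact ⟨(a, b), ⟨hab, hba⟩, fun h => D1.edge_asymm hr.ba h.1⟩
        · rintro ⟨u, v⟩ ⟨h1, h2⟩
          refine ⟨(hr.same u v ?_ ?_).1 h1, h2⟩
          · rintro ⟨rfl, rfl⟩; exact D1.edge_asymm hr.ba h1
          · rintro ⟨rfl, rfl⟩; exact D'.edge_asymm hba h2
      have h1 := ih _ hlt D1 (hr.same'.symm.trans hs) rfl
      exact fun x y S => (hr.mEquiv x y S).trans (h1 x y S)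
    · rw [hs.eq_of_not_exists hex]
      exact fun _ _ _ => Iff.rfl

/-! ### Necessity -/

theorem not_dSep_of_adj {D : Dag V} {x y : V} (h : D.Adj x y) (S : Set V) :
    ¬ D.dSep x y S := by
  rw [not_dSep_iff]
  rcases h with h | h
  · exact Or.inr ⟨_, .startOut h⟩
  · exact Or.inr ⟨_, .startIn h⟩

/-- Separation by the parents of `x`. -/
theorem dSep_parents {D : Dag V} {x y : V} (hne : x ≠ y) (hn : ¬ D.Adj x y)
    (ha : ¬ D.Anc x y) : D.dSep x y (D.Pa x) := by
  by_contra h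
  rw [not_dSep_iff] at h
  have key : ∀ v b, Reach D (D.Pa x) x v b →
      (b = true ∧ Relation.TransGen D.edge x v) ∨ (b = false ∧ v ∈ D.Pa x) := by
    intro v b h
    induction h with
    | startOut h => exact Or.inl ⟨rfl, .single h⟩
    | startIn h => exact Or.inr ⟨rfl, h⟩
    | down _ he hS ih =>
      rcases ih with ⟨_, ih⟩ | ⟨_, ih⟩
      · exact Or.inl ⟨rfl, ih.tail he⟩
      · exact absurd ih hS
    | up _ he hS ih =>
      rcases ih with ⟨h, _⟩ | ⟨_, ih⟩
      · simp at h
      · exact absurd ih hS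
    | coll _ he hS ih =>
      rcases ih with ⟨_, ih⟩ | ⟨h, _⟩
      · exact absurd (ih.tail hS) (D.transGen_irrefl x)
      · simp at h
  rcases h with h | ⟨b, h⟩
  · exact hne h.symm
  · rcases key _ _ h with ⟨_, h⟩ | ⟨_, h⟩
    · exact ha h.to_reflTransGen
    · exact hn (Or.inr h)

/-- d-separation is symmetric enough for our purpose: non-adjacent nodes are separated
in one of the two directions. -/
theorem exists_dSep {D : Dag V} {x y : V} (hne : x ≠ y) (hn : ¬ D.Adj x y) :
    (∃ S, D.dSep x y S) ∨ (∃ S, D.dSep y x S) := by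
  by_cases ha : D.Anc x y
  · right
    refine ⟨_, dSep_parents hne.symm (fun h => hn h.symm) ?_⟩
    intro h
    rcases Relation.ReflTransGen.cases_head ha with h1 | ⟨z, h1, h2⟩
    · exact hne h1
    · exact D.acyclic x z h1 (Relation.ReflTransGen.trans h2 h)
  · exact Or.inl ⟨_, dSep_parents hne hn ha⟩

theorem MEquiv.symm {D D' : Dag V} (h : D.MEquiv D') : D'.MEquiv D :=
  fun x y S => (h x y S).symm

theorem MEquiv.adj_imp {D D' : Dag V} (h : D.MEquiv D') {a b : V} (hab : D.Adj a b) :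
    D'.Adj a b := by
  by_contra hn
  have hne : a ≠ b := by
    rintro rfl
    rcases hab with h | h <;> exact D.edge_irrefl _ h
  rcases exists_dSep hne hn with ⟨S, hS⟩ | ⟨S, hS⟩
  · exact not_dSep_of_adj hab S ((h a b S).2 hS)
  · exact not_dSep_of_adj hab.symm S ((h b a S).2 hS)

/-- collider in between: a separating set does not contain the collider -/
theorem not_mem_of_collider {D : Dag V} {x y z : V} {S : Set V} (h1 : D.edge x z)
    (h2 : D.edge y z) (hs : D.dSep x y S) : z ∉ S := by
  intro hz
  exact (not_dSep_iff D S x y).2 (Or.inr ⟨_, (Reach.startOut h1).coll h2 hz⟩) hs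

theorem mem_of_noncollider {D : Dag V} {x y z : V} {S : Set V} (h1 : D.Adj x z)
    (h2 : D.Adj y z) (hnc : ¬ (D.edge x z ∧ D.edge y z)) (hs : D.dSep x y S) : z ∈ S := by
  by_contra hz
  refine (not_dSep_iff D S x y).2 (Or.inr ?_) hs
  rcases h1 with h1 | h1
  · rcases h2 with h2 | h2
    · exact absurd ⟨h1, h2⟩ hnc
    · exact ⟨_, (Reach.startOut h1).down h2 hz⟩
  · rcases h2 with h2 | h2
    · exact ⟨_, (Reach.startIn h1).up h2 hz⟩
    · exact ⟨_, (Reach.startIn h1).down h2 hz⟩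

theorem MEquiv.vs_imp {D D' : Dag V} (h : D.MEquiv D') {a b c : V} (hne : a ≠ b)
    (hn : ¬ D.Adj a b) (h1 : D.edge a c) (h2 : D.edge b c) :
    D'.edge a c ∧ D'.edge b c := by
  by_contra hnc
  have a1 := h.adj_imp (Or.inl h1)
  have a2 := h.adj_imp (Or.inl h2)
  rcases exists_dSep hne hn with ⟨S, hS⟩ | ⟨S, hS⟩
  · exact not_mem_of_collider h1 h2 hS (mem_of_noncollider a1 a2 hnc ((h a b S).1 hS))
  · exact not_mem_of_collider h2 h1 hS
      (mem_of_noncollider a2 a1 (fun h => hnc h.symm) ((h b a S).1 hS))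

theorem MEquiv.same {D D' : Dag V} (h : D.MEquiv D') : Same D D' :=
  ⟨fun _ _ => ⟨h.adj_imp, h.symm.adj_imp⟩, fun _ _ _ hne hn =>
    ⟨fun h' => h.vs_imp hne hn h'.1 h'.2,
      fun h' => h.symm.vs_imp hne (fun h1 => hn (h.symm.adj_imp h1)) h'.1 h'.2⟩⟩

end Dag

namespace Dag

/-! ### Orientation rules -/

/-- Edges oriented by v-structures and Meek's rules. -/
inductive Ori (D : Dag V) : V → V → Prop
  | vs {a b d : V} : a ≠ d → ¬ D.Adj a d → D.edge a b → D.edge d b → Ori D a b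
  | r1 {d a b : V} : Ori D d a → D.edge a b → d ≠ b → ¬ D.Adj d b → Ori D a b
  | r2 {a e b : V} : Ori D a e → Ori D e b → D.Adj a b → Ori D a b
  | r3 {a b p q : V} : D.Adj a b → D.Adj p a → D.Adj q a → Ori D p b → Ori D q b →
      p ≠ q → ¬ D.Adj p q → ¬ (D.edge p a ∧ D.edge q a) → Ori D a b

theorem Ori.sound {D D' : Dag V} (hs : Same D D') {a b : V} (h : Ori D a b) :
    D'.edge a b := by
  induction h with
  | vs hne hn h1 h2 => exact ((hs.vs _ _ _ hne hn).1 ⟨h1, h2⟩).1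
  | r1 _ hadj hne hn ih =>
    rcases (hs.adj _ _).1 (Or.inl hadj) with h | h
    · exact h
    · exact absurd ((hs.vs _ _ _ hne hn).2 ⟨ih, h⟩).2 (D.edge_asymm hadj)
  | r2 _ _ hadj ih1 ih2 =>
    rcases (hs.adj _ _).1 hadj with h | h
    · exact h
    · exact absurd h (D'.edge_trans_not ih1 ih2)
  | r3 hab hpa hqa _ _ hne hn hnv ih1 ih2 =>
    rcases (hs.adj _ _).1 hab with h | h
    · exact h
    · refine absurd ((hs.vs _ _ _ hne hn).2 ⟨?_, ?_⟩) hnv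
      · rcases (hs.adj _ _).1 hpa with h1 | h1
        · exact h1
        · exact absurd h1 (D'.edge_trans_not ih1 h)
      · rcases (hs.adj _ _).1 hqa with h1 | h1
        · exact h1
        · exact absurd h1 (D'.edge_trans_not ih2 h)

theorem Same.refl (D : Dag V) : Same D D := ⟨fun _ _ => Iff.rfl, fun _ _ _ _ _ => Iff.rfl⟩

theorem Ori.edge {D : Dag V} {a b : V} (h : Ori D a b) : D.edge a b := h.sound (Same.refl D)

/-- Edges left undirected by the rules. -/
def Und (D : Dag V) (a b : V) : Prop := D.Adj a b ∧ ¬ Ori D a b ∧ ¬ Ori D b a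

theorem Und.symm {D : Dag V} {a b : V} (h : Und D a b) : Und D b a :=
  ⟨h.1.symm, h.2.2, h.2.1⟩

theorem Ori.not_und {D : Dag V} {a b : V} (h : Ori D a b) : ¬ Und D a b := fun h' => h'.2.1 h

theorem adj_cases {D : Dag V} {a b : V} (h : D.Adj a b) :
    Ori D a b ∨ Ori D b a ∨ Und D a b := by
  unfold Und; tauto

/-- Rule one, for an undirected edge. -/
theorem Ori.adj_of_und {D : Dag V} {a b c : V} (h : Ori D a b) (hu : Und D b c) :
    D.Adj a c := by
  by_contra hn
  have hne : a ≠ c := by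
    rintro rfl
    exact hu.2.2 h
  rcases hu.1 with he | he
  · exact hu.2.1 (h.r1 he hne hn)
  · exact hu.2.2 (Ori.vs hne.symm (fun hcon => hn hcon.symm) he h.edge)

/-- Undirected neighbours have the same oriented parents. -/
theorem Ori.und {D : Dag V} {a b : V} (h : Ori D a b) : ∀ c, Und D b c → Ori D a c := by
  induction h with
  | vs hne hn h1 h2 =>
    rename_i a b d
    intro c hu
    have hab : Ori D a b := Ori.vs hne hn h1 h2
    have hdb : Ori D d b := Ori.vs hne.symm (fun h => hn h.symm) h2 h1
    have hac := hab.adj_of_und hu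
    have hdc := hdb.adj_of_und hu
    rcases adj_cases hac with h | h | h
    · exact h
    · exact absurd (h.r2 hab hu.1.symm) hu.2.2
    rcases adj_cases hdc with h' | h' | h'
    · exact absurd (h'.adj_of_und h.symm) (fun h => hn h.symm)
    · exact absurd (h'.r2 hdb hu.1.symm) hu.2.2
    · refine absurd (Ori.r3 hu.1.symm hac hdc hab hdb hne hn ?_) hu.2.2
      rintro ⟨e1, e2⟩
      exact h.2.1 (Ori.vs hne hn e1 e2)
  | r1 hda he hne hn ih =>
    rename_i d a b
    intro c hu
    have hab : Ori D a b := hda.r1 he hne hn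
    have hac := hab.adj_of_und hu
    rcases adj_cases hac with h | h | h
    · exact h
    · exact absurd (h.r2 hab hu.1.symm) hu.2.2
    · exact absurd ((ih c h).adj_of_und hu.symm) hn
  | r2 h1 h2 hadj ih1 ih2 =>
    intro c hu
    exact h1.r2 (ih2 c hu) ((h1.r2 h2 hadj).adj_of_und hu)
  | r3 hab hpa hqa h1 h2 hne hn hnv ih1 ih2 =>
    intro c hu
    have hac := (Ori.r3 hab hpa hqa h1 h2 hne hn hnv).adj_of_und hu
    exact Ori.r3 hac hpa hqa (ih1 c hu) (ih2 c hu) hne hn hnv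

/-- The undirected part is oriented by `D` without v-structures. -/
theorem Und.moral {D : Dag V} {x y z : V} (hne : x ≠ y) (h1 : Und D x z) (h2 : Und D y z)
    (e1 : D.edge x z) (e2 : D.edge y z) : Und D x y := by
  by_cases hadj : D.Adj x y
  · rcases adj_cases hadj with h | h | h
    · exact absurd (h.und z h2) h1.2.1
    · exact absurd (h.und z h1) h2.2.1
    · exact h
  · exact absurd (Ori.vs hne hadj e1 e2) h1.2.1

/-- Dirac: simplicial vertices outside a clique. -/
theorem exists_simplicial [Finite V] (D : Dag V) : ∀ (n : ℕ) (T K : Finset V), T.card = n →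
    K ⊆ T → K ≠ T → (∀ a ∈ K, ∀ b ∈ K, a ≠ b → Und D a b) →
    ∃ s ∈ T, s ∉ K ∧ ∀ a ∈ T, ∀ b ∈ T, a ≠ b → Und D a s → Und D b s → Und D a b := by
  classical
  intro n
  induction n with
  | zero =>
    intro T K hT hK hne _
    rw [Finset.card_eq_zero] at hT
    subst hT
    exact absurd (Finset.subset_empty.1 hK) hne
  | succ n ih =>
    intro T K hT hK hne hcl
    obtain ⟨t, htT, hmax⟩ := D.exists_max (fun v => v ∈ T)
      (Finset.card_pos.1 (by omega))
    have hedge : ∀ a ∈ T, Und D a t → D.edge a t := by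
      intro a ha hu
      rcases hu.1 with h | h
      · exact h
      · exact absurd (Relation.TransGen.single h) (hmax a ha)
    have hsimp : ∀ a ∈ T, ∀ b ∈ T, a ≠ b → Und D a t → Und D b t → Und D a b :=
      fun a ha b hb hab h1 h2 => Und.moral hab h1 h2 (hedge a ha h1) (hedge b hb h2)
    by_cases htK : t ∈ K
    · let K' := (T.erase t).filter (fun a => Und D a t)
      have hKK : ∀ a ∈ K, a ≠ t → a ∈ K' := fun a ha hat =>
        Finset.mem_filter.2 ⟨Finset.mem_erase.2 ⟨hat, hK ha⟩, hcl a ha t htK hat⟩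
      have hK'cl : ∀ a ∈ K', ∀ b ∈ K', a ≠ b → Und D a b := by
        intro a ha b hb hab
        obtain ⟨ha1, ha2⟩ := Finset.mem_filter.1 ha
        obtain ⟨hb1, hb2⟩ := Finset.mem_filter.1 hb
        exact hsimp a (Finset.mem_of_mem_erase ha1) b (Finset.mem_of_mem_erase hb1) hab ha2 hb2
      by_cases hall : K' = T.erase t
      · obtain ⟨s, hs, hsK⟩ : ∃ s ∈ T, s ∉ K := by
          by_contra hcon
          push Not at hcon
          exact hne (Finset.Subset.antisymm hK hcon)
        have hmem : ∀ a ∈ T, a ≠ t → a ∈ K' := fun a ha hat => by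
          rw [hall]; exact Finset.mem_erase.2 ⟨hat, ha⟩
        refine ⟨s, hs, hsK, fun a ha b hb hab _ _ => ?_⟩
        by_cases hat : a = t
        · subst hat
          exact (Finset.mem_filter.1 (hmem b hb hab.symm)).2.symm
        by_cases hbt : b = t
        · subst hbt
          exact (Finset.mem_filter.1 (hmem a ha hat)).2
        exact hK'cl a (hmem a ha hat) b (hmem b hb hbt) hab
      · obtain ⟨s, hs, hsK, hss⟩ := ih (T.erase t) K'
          (by rw [Finset.card_erase_of_mem htT]; omega) (Finset.filter_subset _ _) hall hK'cl
        have hst : s ≠ t := Finset.ne_of_mem_erase hs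
        have hnst : ¬ Und D t s := fun hu => hsK (Finset.mem_filter.2 ⟨hs, hu.symm⟩)
        refine ⟨s, Finset.mem_of_mem_erase hs, fun h => hsK (hKK s h hst), ?_⟩
        intro a ha b hb hab h1 h2
        have hat : a ≠ t := by rintro rfl; exact hnst h1
        have hbt : b ≠ t := by rintro rfl; exact hnst h2
        exact hss a (Finset.mem_erase.2 ⟨hat, ha⟩) b (Finset.mem_erase.2 ⟨hbt, hb⟩) hab h1 h2
    · exact ⟨t, htT, htK, hsimp⟩

/-- Perfect orderings of the undirected part starting in a given node. -/
theorem exists_perfect_order [Finite V] (D : Dag V) (v : V) : ∀ (n : ℕ) (T : Finset V),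
    T.card = n + 1 → v ∈ T → ∃ ρ : V → ℕ, (∀ a ∈ T, ρ a < n + 1) ∧
      (∀ a ∈ T, ∀ b ∈ T, ρ a = ρ b → a = b) ∧
      (∀ a ∈ T, a ≠ v → ρ v < ρ a) ∧
      ∀ x ∈ T, ∀ y ∈ T, ∀ z ∈ T, x ≠ y → Und D x z → Und D y z → ρ x < ρ z → ρ y < ρ z →
        Und D x y := by
  classical
  intro n
  induction n with
  | zero =>
    intro T hT hv
    obtain ⟨w, rfl⟩ := Finset.card_eq_one.1 hT
    refine ⟨fun _ => 0, fun _ _ => Nat.zero_lt_one, ?_, ?_, ?_⟩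
    · intro a ha b hb _
      rw [Finset.mem_singleton.1 ha, Finset.mem_singleton.1 hb]
    · intro a ha hav
      rw [Finset.mem_singleton] at ha hv
      exact absurd (ha.trans hv.symm) hav
    · intro x _ y _ z _ _ _ _ h
      exact absurd h (lt_irrefl 0)
  | succ n ih =>
    intro T hT hv
    obtain ⟨s, hs, hsv, hss⟩ := D.exists_simplicial _ T {v} rfl
      (Finset.singleton_subset_iff.2 hv)
      (by rintro rfl; simp at hT) (by
        intro a ha b hb hab
        rw [Finset.mem_singleton] at ha hb
        exact absurd (ha.trans hb.symm) hab)
    have hsv' : v ≠ s := fun h => hsv (Finset.mem_singleton.2 h.symm)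
    obtain ⟨ρ, h1, h2, h3, h4⟩ := ih (T.erase s)
      (by rw [Finset.card_erase_of_mem hs]; omega) (Finset.mem_erase.2 ⟨hsv', hv⟩)
    let σ : V → ℕ := fun a => if a = s then n + 1 else ρ a
    have hσs : σ s = n + 1 := by simp [σ]
    have hσ : ∀ a, a ≠ s → σ a = ρ a := fun a ha => by simp [σ, ha]
    have hT' : ∀ a ∈ T, a ≠ s → a ∈ T.erase s := fun a ha h => Finset.mem_erase.2 ⟨h, ha⟩
    have hlt : ∀ a ∈ T, a ≠ s → σ a < n + 1 := fun a ha h => by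
      rw [hσ a h]; exact h1 a (hT' a ha h)
    have hle : ∀ a ∈ T, σ a ≤ n + 1 := fun a ha => by
      by_cases h : a = s
      · subst h; omega
      · exact (hlt a ha h).le
    refine ⟨σ, fun a ha => by have := hle a ha; omega, ?_, ?_, ?_⟩
    · intro a ha b hb hab
      by_cases has : a = s <;> by_cases hbs : b = s
      · rw [has, hbs]
      · have := hlt b hb hbs
        subst has; omega
      · have := hlt a ha has
        subst hbs; omega
      · rw [hσ a has, hσ b hbs] at hab
        exact h2 a (hT' a ha has) b (hT' b hb hbs) hab
    · intro a ha hav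
      by_cases has : a = s
      · have := hlt v hv hsv'
        subst has; omega
      · rw [hσ a has, hσ v hsv']
        exact h3 a (hT' a ha has) hav
    · intro x hx y hy z hz hxy hxz hyz h5 h6
      by_cases hzs : z = s
      · subst hzs
        exact hss x hx y hy hxy hxz hyz
      · have h7 := hlt z hz hzs
        have hxs : x ≠ s := by rintro rfl; omega
        have hys : y ≠ s := by rintro rfl; omega
        rw [hσ x hxs, hσ z hzs] at h5
        rw [hσ y hys, hσ z hzs] at h6
        exact h4 x (hT' x hx hxs) y (hT' y hy hys) z (hT' z hz hzs) hxy hxz hyz h5 h6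

/-- Completeness: an undirected edge can be oriented away from any of its ends. -/
theorem Und.exists_same [Finite V] {D : Dag V} {a c : V} (hac : Und D a c) :
    ∃ D' : Dag V, Same D D' ∧ D'.edge a c := by
  classical
  have := Fintype.ofFinite V
  have hcard : 0 < (Finset.univ : Finset V).card := Finset.card_pos.2 ⟨a, Finset.mem_univ a⟩
  obtain ⟨ρ, -, hinj, hfirst, hperf⟩ := D.exists_perfect_order a
    ((Finset.univ : Finset V).card - 1) Finset.univ (by omega) (Finset.mem_univ a)
  let E : V → V → Prop := fun u v => Ori D u v ∨ (Und D u v ∧ ρ u < ρ v)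
  have absorb : ∀ u v w, Relation.TransGen (Ori D) u v →
      Relation.ReflTransGen (Und D) v w → Relation.TransGen (Ori D) u w := by
    intro u v w h1 h2
    induction h2 with
    | refl => exact h1
    | tail _ he ih =>
      obtain ⟨z, hz1, hz2⟩ := Relation.TransGen.tail'_iff.1 ih
      exact Relation.TransGen.tail' hz1 (hz2.und _ he)
  have hpath : ∀ u v, Relation.TransGen E u v →
      (ρ u < ρ v ∧ Relation.ReflTransGen (Und D) u v) ∨
      ∃ w, Relation.ReflTransGen (Und D) u w ∧ Relation.TransGen (Ori D) w v := by
    intro u v h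
    induction h with
    | single he =>
      rcases he with he | ⟨he, hlt⟩
      · exact Or.inr ⟨_, .refl, .single he⟩
      · exact Or.inl ⟨hlt, .single he⟩
    | tail _ he ih =>
      rcases ih with ⟨ih1, ih2⟩ | ⟨w, ih1, ih2⟩
      · rcases he with he | ⟨he, hlt⟩
        · exact Or.inr ⟨_, ih2, .single he⟩
        · exact Or.inl ⟨ih1.trans hlt, ih2.tail he⟩
      · rcases he with he | ⟨he, hlt⟩
        · exact Or.inr ⟨w, ih1, ih2.tail he⟩
        · exact Or.inr ⟨w, ih1, absorb _ _ _ ih2 (.single he)⟩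
  have hacyc : ∀ u v : V, E u v → ¬ Relation.ReflTransGen E v u := by
    intro u v he hp
    rcases hpath u u (Relation.TransGen.head' he hp) with ⟨h, -⟩ | ⟨w, h1, h2⟩
    · exact lt_irrefl _ h
    · have h3 := absorb _ _ _ h2 h1
      exact D.transGen_irrefl w (Relation.TransGen.mono (r := Ori D) (p := D.edge)
        (fun _ _ h => h.edge) w w h3)
  refine ⟨⟨E, hacyc⟩, ⟨?_, ?_⟩, Or.inr ⟨hac, hfirst c (Finset.mem_univ c) ?_⟩⟩
  · intro u v
    constructor
    · intro h
      rcases adj_cases h with h' | h' | h'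
      · exact Or.inl (Or.inl h')
      · exact Or.inr (Or.inl h')
      · have hne : ρ u ≠ ρ v := by
          intro he
          have := hinj u (Finset.mem_univ u) v (Finset.mem_univ v) he
          subst this
          rcases h with h | h <;> exact D.edge_irrefl _ h
        rcases Nat.lt_or_gt_of_ne hne with hl | hl
        · exact Or.inl (Or.inr ⟨h', hl⟩)
        · exact Or.inr (Or.inr ⟨h'.symm, hl⟩)
    · rintro ((h | h) | (h | h))
      · exact Or.inl h.edge
      · exact h.1.1
      · exact Or.inr h.edge
      · exact h.1.1.symm
  · intro u v w hne hn
    constructor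
    · rintro ⟨h1, h2⟩
      exact ⟨Or.inl (Ori.vs hne hn h1 h2),
        Or.inl (Ori.vs hne.symm (fun h => hn h.symm) h2 h1)⟩
    · rintro ⟨h1 | ⟨h1, l1⟩, h2 | ⟨h2, l2⟩⟩
      · exact ⟨h1.edge, h2.edge⟩
      · exact absurd (Or.inl (h1.und v h2.symm).edge) hn
      · exact absurd (Or.inr (h2.und u h1.symm).edge) hn
      · exact absurd (hperf u (Finset.mem_univ u) v (Finset.mem_univ v) w (Finset.mem_univ w)
          hne h1 h2 l1 l2).1 hn
  · rintro rfl
    rcases hac.1 with h | h <;> exact D.edge_irrefl _ h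

theorem cpDir_iff_ori [Finite V] (D : Dag V) (a b : V) : D.CpDir a b ↔ Ori D a b := by
  constructor
  · intro h
    have hab : D.edge a b := h D (fun _ _ _ => Iff.rfl)
    rcases adj_cases (Or.inl hab : D.Adj a b) with h' | h' | h'
    · exact h'
    · exact absurd h'.edge (D.edge_asymm hab)
    · obtain ⟨D', hs, he⟩ := h'.symm.exists_same
      exact absurd (h D' hs.mEquiv) (D'.edge_asymm he)
  · intro h D' hm
    exact h.sound hm.same

/-- Shortcutting a shielded triple of a possibly directed path. -/
theorem not_cpDir_of_triangle [Finite V] {D : Dag V} {a b c : V} (hab : D.Adj a b)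
    (hbc : D.Adj b c) (h1 : ¬ D.CpDir b a) (h2 : ¬ D.CpDir c b) : ¬ D.CpDir c a := by
  rw [cpDir_iff_ori] at *
  intro h
  rcases adj_cases hab with h' | h' | h'
  · exact h2 (h.r2 h' hbc.symm)
  · exact h1 h'
  · exact h2 (h.und b h')

end Dag

theorem exists_unshielded_aux {V : Type*} [Finite V] (D : Dag V) (X Y : V) : ∀ (n : ℕ)
    (p : GPath D.Adj X Y), p.n = n → p.CpPossiblyDirected →
    ∃ q : GPath D.Adj X Y, q.CpPossiblyDirected ∧ q.Unshielded ∧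
      ∃ g : Fin (q.n + 1) → Fin (p.n + 1), StrictMono g ∧ ∀ i, q.f i = p.f (g i) := by
  intro n
  induction n with
  | zero =>
    intro p hn hp
    exact ⟨p, hp, fun i hi => by omega, id, strictMono_id, fun _ => rfl⟩
  | succ n ih =>
    intro p hn hp
    by_cases hu : p.Unshielded
    · exact ⟨p, hp, hu, id, strictMono_id, fun _ => rfl⟩
    unfold GPath.Unshielded at hu
    push Not at hu
    obtain ⟨i, hi, hadj⟩ := hu
    let e : Fin (n + 1) → Fin (p.n + 1) := fun k =>
      ⟨if k.1 ≤ i then k.1 else k.1 + 1, by have := k.2; split <;> omega⟩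
    have he1 : ∀ k : Fin (n + 1), k.1 ≤ i → (e k).1 = k.1 := fun k hk => by simp [e, hk]
    have he2 : ∀ k : Fin (n + 1), i < k.1 → (e k).1 = k.1 + 1 := fun k hk => by
      simp [e, Nat.not_le.2 hk]
    have hmono : StrictMono e := by
      intro k l hkl
      rw [Fin.lt_def] at hkl ⊢
      rcases Nat.lt_or_ge i k.1 with h1 | h1 <;> rcases Nat.lt_or_ge i l.1 with h2 | h2
      · rw [he2 k h1, he2 l h2]; omega
      · omega
      · rw [he1 k h1, he2 l h2]; omega
      · rw [he1 k h1, he1 l h2]; omega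
    have hstep : ∀ k : Fin n, D.Adj (p.f (e k.castSucc)) (p.f (e k.succ)) ∧
        ¬ D.CpDir (p.f (e k.succ)) (p.f (e k.castSucc)) := by
      intro k
      have hk := k.2
      have hedge : ∀ (m : ℕ) (hm : m < p.n) (s t : Fin (p.n + 1)), s.1 = m → t.1 = m + 1 →
          D.Adj (p.f s) (p.f t) ∧ ¬ D.CpDir (p.f t) (p.f s) := by
        intro m hm s t hs ht
        have h1 : s = (⟨m, hm⟩ : Fin p.n).castSucc := Fin.ext hs
        have h2 : t = (⟨m, hm⟩ : Fin p.n).succ := Fin.ext ht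
        rw [h1, h2]
        exact ⟨p.adj _, hp _⟩
      have hs1 : (k.succ : Fin (n + 1)).1 = k.1 + 1 := rfl
      have hs0 : (k.castSucc : Fin (n + 1)).1 = k.1 := rfl
      rcases Nat.lt_trichotomy k.1 i with h | h | h
      · exact hedge k.1 (by omega) _ _ (he1 _ (by omega)) (by rw [he1 _ (by omega), hs1])
      · have e1 : e k.castSucc = ⟨i, by omega⟩ := Fin.ext (by rw [he1 _ (by omega)]; exact h)
        have e2 : e k.succ = ⟨i + 2, by omega⟩ :=
          Fin.ext (by rw [he2 _ (by omega), hs1, h])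
        rw [e1, e2]
        obtain ⟨a1, c1⟩ := hedge i (by omega) ⟨i, by omega⟩ ⟨i + 1, by omega⟩ rfl rfl
        obtain ⟨a2, c2⟩ := hedge (i + 1) (by omega) ⟨i + 1, by omega⟩ ⟨i + 2, by omega⟩ rfl rfl
        exact ⟨hadj, Dag.not_cpDir_of_triangle a1 a2 c1 c2⟩
      · exact hedge (k.1 + 1) (by omega) _ _ (he2 _ (by omega)) (by rw [he2 _ (by omega), hs1])
    let p' : GPath D.Adj X Y :=
      { n := n
        f := fun k => p.f (e k)
        inj := fun k l h => hmono.injective (p.inj h)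
        first := by
          exact (congrArg p.f (Fin.ext (he1 _ (Nat.zero_le _)))).trans p.first
        last := by
          refine (congrArg p.f (Fin.ext ?_)).trans p.last
          rw [he2 _ (by change i < n; omega)]
          exact hn.symm
        adj := fun k => (hstep k).1 }
    obtain ⟨q, hq1, hq2, g, hg, hqg⟩ := ih p' rfl (fun k => (hstep k).2)
    exact ⟨q, hq1, hq2, fun k => e (g k), hmono.comp hg, hqg⟩

/-- If `p` is a possibly directed path from `X` to `Y` in the CPDAG `G` of
the MEC of a DAG, then some subsequence of the nodes of `p` forms an unshielded possibly
directed path from `X` to `Y` in `G`. -/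
theorem exists_unshielded_possiblyDirected_subsequence
    {V : Type*} [Fintype V] (D : Dag V) (X Y : V) (hXY : X ≠ Y)
    (p : GPath D.Adj X Y) (hp : p.CpPossiblyDirected) :
    ∃ q : GPath D.Adj X Y, q.CpPossiblyDirected ∧ q.Unshielded ∧
      ∃ g : Fin (q.n + 1) → Fin (p.n + 1), StrictMono g ∧ ∀ i, q.f i = p.f (g i) := by
  exact exists_unshielded_aux D X Y p.n p rfl hp
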